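/- Let s be a complex number with Re(s) > 0, and let k, v be real numbers with k > 2 and 0 < v ≤ 2. Then (2/π) · ∫_{k−v}^{k+v} u^{s+1} / √( 4k²v² − (u² − v² − k²)² ) du = k^s · ₂F₁(−s/2, −s/2; 1; v²/k²). -/

import Mathlib

open MeasureTheory Real

/-- The Pochhammer symbol `(a)_n = a (a+1) ⋯ (a+n-1)` for a complex number `a`. -/
noncomputable def cpoch (a : ℂ) (n : ℕ) : ℂ := ∏ i ∈ Finset.range n, (a + i)

/-- The Gauss hypergeometric series `₂F₁(a,b; c; z)`. -/
noncomputable def F21 (a b c z : ℂ) : ℂ :=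
  ∑' n : ℕ, (cpoch a n * cpoch b n) / cpoch c n * z ^ n / (n.factorial : ℂ)

/-!
By the law of cosines, `u = ‖k + v * exp (i θ)‖` satisfies `u² - v² - k² = 2 k v cos θ`, so the
square root in the integrand is `2 k v sin θ` and the substitution turns the integral into the mean
of `‖z‖ ^ s` over the circle of centre `k` and radius `v`. On that circle `z = k (1 + w)` with
`‖w‖ = v / k < 1`, and `‖1 + w‖ ^ s = (1 + w) ^ (s / 2) * (1 + conj w) ^ (s / 2)`. Expanding both
factors in binomial series, orthogonality of the characters `exp (i n θ)` leaves only the diagonal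
terms, which are those of `₂F₁(-s/2, -s/2; 1; v²/k²)`.
-/

open Metric Set
open scoped ComplexConjugate

section Binomial

lemma cpoch_eq_ascPochhammer_eval (a : ℂ) (n : ℕ) : cpoch a n = (ascPochhammer ℂ n).eval a := by
  induction n with
  | zero => simp [cpoch]
  | succ n ih => rw [ascPochhammer_succ_eval, ← ih, cpoch, cpoch, Finset.prod_range_succ]

lemma cpoch_one (n : ℕ) : cpoch 1 n = n.factorial := by
  rw [cpoch_eq_ascPochhammer_eval, ascPochhammer_eval_one]

lemma ringChoose_add_sub_one_eq_cpoch_div_factorial (a : ℂ) (n : ℕ) :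
    Ring.choose (a + n - 1) n = cpoch a n / n.factorial := by
  have h := Ring.factorial_nsmul_multichoose_eq_ascPochhammer a n
  rw [Polynomial.ascPochhammer_smeval_eq_eval, ← cpoch_eq_ascPochhammer_eval, nsmul_eq_mul] at h
  rw [← h, mul_div_cancel_left₀ _ (mod_cast n.factorial_ne_zero), Ring.choose]
  ring_nf

lemma hasSum_cpoch_div_factorial_mul_pow (a : ℂ) {z : ℂ} (hz : ‖z‖ < 1) :
    HasSum (fun n : ℕ => cpoch a n / n.factorial * z ^ n) ((1 - z) ^ (-a)) := by
  have hz' : z ∈ eball (0 : ℂ) 1 := by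
    rwa [← ENNReal.ofReal_one, eball_ofReal, mem_ball_zero_iff]
  have h := (Complex.one_div_one_sub_cpow_hasFPowerSeriesOnBall_zero a).hasSum hz'
  simpa only [FormalMultilinearSeries.ofScalars_apply_eq, smul_eq_mul, zero_add, one_div,
    ← Complex.cpow_neg, ringChoose_add_sub_one_eq_cpoch_div_factorial] using h

end Binomial

section CircleAverage

variable {E : Type*} [NormedAddCommGroup E] [NormedSpace ℝ E]

lemma hasSum_circleAverage_of_summable_bound {ι : Type*} [Countable ι] {F : ι → ℂ → E}
    {f : ℂ → E} {c : ℂ} {R : ℝ} {bound : ι → ℝ}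
    (hF : ∀ i, ContinuousOn (F i) (sphere c |R|))
    (hF_le : ∀ i, ∀ z ∈ sphere c |R|, ‖F i z‖ ≤ bound i) (hbound : Summable bound)
    (hf : ∀ z ∈ sphere c |R|, HasSum (fun i => F i z) (f z)) :
    HasSum (fun i => circleAverage (F i) c R) (circleAverage f c R) := by
  refine (intervalIntegral.hasSum_integral_of_dominated_convergence (fun i _ => bound i)
    (fun i => ?_) (fun i => ?_) ?_ intervalIntegrable_const ?_).const_smul _
  · exact ((hF i).comp_continuous (continuous_circleMap c R)
      (circleMap_mem_sphere' c R)).aestronglyMeasurable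
  · exact .of_forall fun θ _ => hF_le i _ (circleMap_mem_sphere' c R θ)
  · exact .of_forall fun _ _ => hbound
  · exact .of_forall fun θ _ => hf _ (circleMap_mem_sphere' c R θ)

lemma circleAverage_pow_mul_conj_pow (R : ℝ) (n m : ℕ) :
    circleAverage (fun z => z ^ n * conj z ^ m) 0 R = if n = m then (R : ℂ) ^ (2 * n) else 0 := by
  split_ifs with hnm
  · subst hnm
    refine circleAverage_const_on_circle fun z hz => ?_
    rw [← mul_pow, Complex.mul_conj', mem_sphere_zero_iff_norm.1 hz, pow_mul,
      ← Complex.ofReal_pow, sq_abs, Complex.ofReal_pow]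
  · have hne : ((n : ℂ) - m) * Complex.I ≠ 0 :=
      mul_ne_zero (sub_ne_zero.2 (mod_cast hnm)) Complex.I_ne_zero
    have hexp (θ : ℝ) : circleMap 0 R θ ^ n * conj (circleMap 0 R θ) ^ m =
        (R : ℂ) ^ (n + m) * Complex.exp (((n : ℂ) - m) * Complex.I * θ) := by
      rw [conj_circleMap_zero, circleMap_zero_pow, circleMap_zero_pow, circleMap_zero_mul,
        circleMap_zero]
      push_cast
      ring_nf
    have hperiod : Complex.exp (((n : ℂ) - m) * Complex.I * (2 * π : ℝ)) = 1 :=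
      Complex.exp_eq_one_iff.2 ⟨n - m, by push_cast; ring⟩
    simp only [circleAverage, hexp, intervalIntegral.integral_const_mul,
      integral_exp_mul_complex hne, hperiod]
    simp

lemma circleAverage_mul_pow_mul_mul_conj_pow (a b : ℂ) (R : ℝ) (n m : ℕ) :
    circleAverage (fun z => a * z ^ n * (b * conj z ^ m)) 0 R =
      if n = m then a * b * (R : ℂ) ^ (2 * n) else 0 := by
  simp only [mul_mul_mul_comm a, ← smul_eq_mul (a * b), circleAverage_fun_smul,
    circleAverage_pow_mul_conj_pow, smul_ite, smul_zero]

lemma hasSum_mul_prod {ι ι' A : Type*} [NormedRing A] [NormedSpace ℝ A] [FiniteDimensional ℝ A]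
    {f : ι → A} {g : ι' → A} {x y : A} (hf : HasSum f x) (hg : HasSum g y) :
    HasSum (fun p : ι × ι' => f p.1 * g p.2) (x * y) :=
  have := FiniteDimensional.complete ℝ A
  hf.mul hg (summable_mul_of_summable_norm hf.summable.norm hg.summable.norm)

lemma hasSum_circleAverage_mul_comp_conj {a b : ℕ → ℂ} {f g : ℂ → ℂ} {R : ℝ}
    (hf : ∀ z ∈ sphere (0 : ℂ) |R|, HasSum (fun n => a n * z ^ n) (f z))
    (hg : ∀ z ∈ sphere (0 : ℂ) |R|, HasSum (fun n => b n * z ^ n) (g z)) :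
    HasSum (fun n => a n * b n * (R : ℂ) ^ (2 * n))
      (circleAverage (fun z => f z * g (conj z)) 0 R) := by
  have hprod (z : ℂ) (hz : z ∈ sphere (0 : ℂ) |R|) :
      HasSum (fun p : ℕ × ℕ => a p.1 * z ^ p.1 * (b p.2 * conj z ^ p.2)) (f z * g (conj z)) := by
    have h := hasSum_mul_prod (hf z hz) (hg (conj z) (by simpa using hz))
    exact h
  have hnorm (p : ℕ × ℕ) (z : ℂ) (hz : z ∈ sphere (0 : ℂ) |R|) :
      ‖a p.1 * z ^ p.1 * (b p.2 * conj z ^ p.2)‖ =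
        ‖a p.1 * R ^ p.1 * (b p.2 * conj (R : ℂ) ^ p.2)‖ := by
    simp only [norm_mul, norm_pow, RCLike.norm_conj, mem_sphere_zero_iff_norm.1 hz,
      Complex.norm_real, Real.norm_eq_abs]
  have hbound := (hprod R (by simp)).summable.norm
  have hcont (p : ℕ × ℕ) : Continuous fun z : ℂ => a p.1 * z ^ p.1 * (b p.2 * conj z ^ p.2) := by
    fun_prop
  have hterms := hasSum_circleAverage_of_summable_bound (fun p => (hcont p).continuousOn)
    (fun p z hz => (hnorm p z hz).le) hbound hprod
  have hdiag : Function.Injective fun n : ℕ => (n, n) := fun _ _ h => congrArg Prod.fst h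
  have hoff (p : ℕ × ℕ) (hp : p ∉ range fun n : ℕ => (n, n)) :
      (if p.1 = p.2 then a p.1 * b p.2 * (R : ℂ) ^ (2 * p.1) else 0) = 0 :=
    if_neg fun h => hp ⟨p.1, Prod.ext rfl h⟩
  simp only [circleAverage_mul_pow_mul_mul_conj_pow] at hterms
  simpa only [Function.comp_def, if_true] using (hdiag.hasSum_iff hoff).2 hterms

end CircleAverage

section PowerMean

lemma circleAverage_one_sub_cpow_mul_one_sub_conj_cpow (a b : ℂ) {x y : ℂ} {R : ℝ}
    (hx : ‖x‖ * |R| < 1) (hy : ‖y‖ * |R| < 1) :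
    circleAverage (fun z => (1 - x * z) ^ (-a) * (1 - y * conj z) ^ (-b)) 0 R =
      F21 a b 1 (x * y * R ^ 2) := by
  have hseries (e : ℂ) {w : ℂ} (hw : ‖w‖ * |R| < 1) (z : ℂ) (hz : z ∈ sphere (0 : ℂ) |R|) :
      HasSum (fun n : ℕ => cpoch e n / n.factorial * w ^ n * z ^ n) ((1 - w * z) ^ (-e)) := by
    have hwz : ‖w * z‖ < 1 := by rwa [norm_mul, mem_sphere_zero_iff_norm.1 hz]
    simpa only [mul_pow, mul_assoc] using hasSum_cpoch_div_factorial_mul_pow e hwz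
  rw [F21, ← (hasSum_circleAverage_mul_comp_conj (hseries a hx) (hseries b hy)).tsum_eq]
  refine tsum_congr fun n => ?_
  rw [cpoch_one, mul_pow, mul_pow, pow_mul]
  ring

lemma cpow_half_mul_conj_cpow_half (s : ℂ) {z : ℂ} (hz : z ∈ Complex.slitPlane) :
    z ^ (s / 2) * conj z ^ (s / 2) = (‖z‖ : ℂ) ^ s := by
  have hz0 : z ≠ 0 := Complex.slitPlane_ne_zero hz
  have hlog : Complex.log z + conj (Complex.log z) = 2 * Complex.log ‖z‖ := by
    rw [Complex.add_conj, Complex.log_re, ← Complex.ofReal_log (norm_nonneg z)]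
    push_cast
    rfl
  rw [Complex.cpow_def_of_ne_zero hz0, Complex.cpow_def_of_ne_zero ((map_ne_zero _).2 hz0),
    Complex.cpow_def_of_ne_zero (mod_cast norm_ne_zero_iff.2 hz0),
    Complex.log_conj z (Complex.slitPlane_arg_ne_pi hz), ← Complex.exp_add, ← add_mul, hlog]
  ring_nf

theorem circleAverage_norm_cpow (s : ℂ) {c : ℂ} {R : ℝ} (hR : |R| < ‖c‖) :
    circleAverage (fun z => (‖z‖ : ℂ) ^ s) c R =
      (‖c‖ : ℂ) ^ s * F21 (-(s / 2)) (-(s / 2)) 1 ((R ^ 2 / ‖c‖ ^ 2 : ℝ) : ℂ) := by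
  have hc : 0 < ‖c‖ := (abs_nonneg R).trans_lt hR
  have hx : ‖-c⁻¹‖ * |R| < 1 := by rwa [norm_neg, norm_inv, inv_mul_lt_one₀ hc]
  have hfactor (z : ℂ) (hz : z ∈ sphere (0 : ℂ) |R|) : (‖z + c‖ : ℂ) ^ s =
      (‖c‖ : ℂ) ^ s • ((1 - -c⁻¹ * z) ^ (- -(s / 2)) *
        (1 - conj (-c⁻¹) * conj z) ^ (- -(s / 2))) := by
    have hw : ‖c⁻¹ * z‖ < 1 := by
      rwa [norm_mul, mem_sphere_zero_iff_norm.1 hz, ← norm_neg c⁻¹]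
    have hzc : z + c = c * (1 + c⁻¹ * z) := by
      rw [mul_add, mul_inv_cancel_left₀ (norm_pos_iff.1 hc), mul_one, add_comm]
    have hconj : 1 + conj c⁻¹ * conj z = conj (1 + c⁻¹ * z) := by simp
    rw [neg_neg, map_neg, neg_mul, neg_mul, sub_neg_eq_add, sub_neg_eq_add, hconj,
      cpow_half_mul_conj_cpow_half s (Complex.mem_slitPlane_of_norm_lt_one hw), hzc, norm_mul,
      Complex.ofReal_mul, Complex.mul_cpow_ofReal_nonneg hc.le (norm_nonneg _), smul_eq_mul]
  have hratio : -c⁻¹ * conj (-c⁻¹) * (R : ℂ) ^ 2 = ((R ^ 2 / ‖c‖ ^ 2 : ℝ) : ℂ) := by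
    rw [Complex.mul_conj', norm_neg, norm_inv]
    push_cast
    ring
  rw [← circleAverage_map_add_const, circleAverage_congr_sphere hfactor, circleAverage_fun_smul,
    circleAverage_one_sub_cpow_mul_one_sub_conj_cpow _ _ hx (by rwa [RCLike.norm_conj]), hratio,
    smul_eq_mul]

end PowerMean

section RadialIntegral

variable {E : Type*} [NormedAddCommGroup E] [NormedSpace ℝ E]

lemma intervalIntegral_neg_self_of_even {f : ℝ → E} (hf : f.Even) (a : ℝ) :
    ∫ x in -a..a, f x = (2 : ℝ) • ∫ x in 0..a, f x := by
  have hneg : ∫ x in -a..0, f x = ∫ x in 0..a, f x := by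
    simpa only [hf _, neg_zero, neg_neg] using
      intervalIntegral.integral_comp_neg (a := -a) (b := 0) f
  by_cases hint : IntervalIntegrable f volume 0 a
  · have hint' : IntervalIntegrable f volume (-a) 0 := by
      simpa only [hf _, neg_zero] using ((IntervalIntegrable.iff_comp_neg (by simp)).1 hint).symm
    rw [← intervalIntegral.integral_add_adjacent_intervals hint' hint, hneg, two_smul]
  · have hint' : ¬IntervalIntegrable f volume (-a) a := fun h =>
      hint (h.mono_set (uIcc_subset_uIcc_right (by
        rcases le_total 0 a with ha | ha <;> simp [ha])))
    rw [intervalIntegral.integral_undef hint, intervalIntegral.integral_undef hint', smul_zero]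

lemma circleAverage_eq_integral_zero_pi {f : ℂ → E} (hf : ∀ z, f (conj z) = f z) (c R : ℝ) :
    circleAverage f c R = π⁻¹ • ∫ θ in 0..π, f (circleMap c R θ) := by
  have heven : (fun θ => f (circleMap c R θ)).Even := fun θ => by
    change f (circleMap c R (-θ)) = f (circleMap c R θ)
    rw [← hf (circleMap c R θ), conj_circleMap, Complex.conj_ofReal]
  have hperiod : (fun θ => f (circleMap c R θ)).Periodic (2 * π) := fun θ =>
    congrArg f (periodic_circleMap c R θ)
  have hshift : ∫ θ in 0..2 * π, f (circleMap c R θ) = ∫ θ in -π..π, f (circleMap c R θ) := by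
    convert hperiod.intervalIntegral_add_eq 0 (-π) using 2 <;> ring
  rw [circleAverage_def, hshift, intervalIntegral_neg_self_of_even heven, smul_smul, mul_inv_rev,
    inv_mul_cancel_right₀ two_ne_zero]

lemma norm_circleMap_ofReal_sq (k v θ : ℝ) :
    ‖circleMap k v θ‖ ^ 2 = k ^ 2 + v ^ 2 + 2 * k * v * cos θ := by
  have hre : (circleMap k v θ).re = k + v * cos θ := by simp [circleMap]
  have him : (circleMap k v θ).im = v * sin θ := by simp [circleMap]
  rw [Complex.sq_norm, Complex.normSq_apply, hre, him]
  linear_combination v ^ 2 * sin_sq_add_cos_sq θ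

variable {k v : ℝ}

lemma sqrt_sub_norm_circleMap_sq {θ : ℝ} (hk : 0 ≤ k) (hv : 0 ≤ v) (hθ : θ ∈ Icc 0 π) :
    √(4 * k ^ 2 * v ^ 2 - (‖circleMap k v θ‖ ^ 2 - v ^ 2 - k ^ 2) ^ 2) = 2 * k * v * sin θ := by
  have hsin : 0 ≤ sin θ := sin_nonneg_of_mem_Icc hθ
  rw [norm_circleMap_ofReal_sq, ← sqrt_sq (by positivity : 0 ≤ 2 * k * v * sin θ)]
  congr 1
  linear_combination -(4 * k ^ 2 * v ^ 2) * sin_sq_add_cos_sq θ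

lemma strictAntiOn_norm_circleMap (hk : 0 < k) (hv : 0 < v) :
    StrictAntiOn (fun θ => ‖circleMap k v θ‖) (Icc 0 π) := by
  intro θ hθ φ hφ hlt
  refine lt_of_pow_lt_pow_left₀ 2 (norm_nonneg _) ?_
  rw [norm_circleMap_ofReal_sq, norm_circleMap_ofReal_sq]
  gcongr
  exact strictAntiOn_cos hθ hφ hlt

lemma image_norm_circleMap_Ioo (hk : 0 < k) (hv : 0 < v) :
    (fun θ => ‖circleMap k v θ‖) '' Ioo 0 π = Ioo |k - v| (k + v) := by
  have hzero : ‖circleMap k v 0‖ = k + v := by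
    rw [← abs_of_pos (add_pos hk hv)]
    simp [circleMap, ← Complex.ofReal_add]
  have hpi : ‖circleMap k v π‖ = |k - v| := by
    simp [circleMap, ← sub_eq_add_neg, ← Complex.ofReal_sub]
  rw [((continuous_circleMap (k : ℂ) v).norm.continuousOn).image_Ioo_of_strictAntiOn pi_pos.le
    (strictAntiOn_norm_circleMap hk hv), hzero, hpi]

lemma hasDerivAt_norm_circleMap {θ : ℝ} (h : circleMap k v θ ≠ 0) :
    HasDerivAt (fun θ => ‖circleMap k v θ‖) (-(k * v * sin θ / ‖circleMap k v θ‖)) θ := by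
  have hnorm (φ : ℝ) : ‖circleMap k v φ‖ = √(k ^ 2 + v ^ 2 + 2 * k * v * cos φ) := by
    rw [← norm_circleMap_ofReal_sq, sqrt_sq (norm_nonneg _)]
  have hpos : k ^ 2 + v ^ 2 + 2 * k * v * cos θ ≠ 0 := by
    rw [← norm_circleMap_ofReal_sq]
    exact pow_ne_zero 2 (norm_ne_zero_iff.2 h)
  simp only [hnorm]
  convert (((hasDerivAt_cos θ).const_mul (2 * k * v)).const_add (k ^ 2 + v ^ 2)).sqrt hpos using 1
  ring

theorem integral_comp_norm_circleMap (f : ℝ → E) (hk : 0 < k) (hv : 0 < v) :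
    ∫ θ in 0..π, f ‖circleMap k v θ‖ =
      (2 : ℝ) • ∫ u in |k - v|..(k + v),
        (u / √(4 * k ^ 2 * v ^ 2 - (u ^ 2 - v ^ 2 - k ^ 2) ^ 2)) • f u := by
  have hle : |k - v| ≤ k + v := abs_sub_le_iff.2 ⟨by linarith, by linarith⟩
  have hpos {θ : ℝ} (hθ : θ ∈ Ioo 0 π) : 0 < ‖circleMap k v θ‖ :=
    (abs_nonneg _).trans_lt
      ((image_norm_circleMap_Ioo hk hv).subset (mem_image_of_mem _ hθ)).1
  rw [intervalIntegral.integral_of_le hle, integral_Ioc_eq_integral_Ioo,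
    ← image_norm_circleMap_Ioo hk hv,
    integral_image_eq_integral_deriv_smul_of_antitoneOn measurableSet_Ioo
      (fun θ hθ => (hasDerivAt_norm_circleMap (norm_pos_iff.1 (hpos hθ))).hasDerivWithinAt)
      ((strictAntiOn_norm_circleMap hk hv).antitoneOn.mono Ioo_subset_Icc_self),
    ← integral_smul, intervalIntegral.integral_of_le pi_pos.le, integral_Ioc_eq_integral_Ioo]
  refine setIntegral_congr_fun measurableSet_Ioo fun θ hθ => ?_
  have hnorm : ‖circleMap k v θ‖ ≠ 0 := (hpos hθ).ne'
  have hsin : sin θ ≠ 0 := (sin_pos_of_mem_Ioo hθ).ne'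
  have hweight : 2 * (k * v * sin θ / ‖circleMap k v θ‖ *
      (‖circleMap k v θ‖ / (2 * k * v * sin θ))) = 1 := by
    field_simp
  simp only [sqrt_sub_norm_circleMap_sq hk.le hv.le (Ioo_subset_Icc_self hθ), neg_neg, smul_smul,
    hweight, one_smul]

theorem circleAverage_comp_norm (f : ℝ → E) (hk : 0 < k) (hv : 0 < v) :
    circleAverage (fun z => f ‖z‖) k v = (2 / π) • ∫ u in |k - v|..(k + v),
        (u / √(4 * k ^ 2 * v ^ 2 - (u ^ 2 - v ^ 2 - k ^ 2) ^ 2)) • f u := by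
  rw [circleAverage_eq_integral_zero_pi (fun z => by rw [RCLike.norm_conj]),
    integral_comp_norm_circleMap f hk hv, smul_smul, inv_mul_eq_div]

end RadialIntegral

theorem integral_cpow_div_sqrt_general (s : ℂ) (k v : ℝ) (hv0 : 0 < v) (hvk : v < k) :
    (2 / (π : ℂ)) *
        ∫ u in (k - v)..(k + v),
          (u : ℂ) ^ (s + 1) /
            (Real.sqrt (4 * k ^ 2 * v ^ 2 - (u ^ 2 - v ^ 2 - k ^ 2) ^ 2) : ℂ) =
      (k : ℂ) ^ s * F21 (-(s / 2)) (-(s / 2)) 1 (((v ^ 2 / k ^ 2 : ℝ)) : ℂ) := by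
  have hk : 0 < k := hv0.trans hvk
  have hnorm : ‖(k : ℂ)‖ = k := by rw [Complex.norm_real, norm_of_nonneg hk.le]
  have hmean := circleAverage_norm_cpow s (c := k) (R := v) (by rwa [hnorm, abs_of_pos hv0])
  rw [circleAverage_comp_norm (fun u => (u : ℂ) ^ s) hk hv0, hnorm, abs_of_pos (sub_pos.2 hvk),
    Complex.real_smul] at hmean
  rw [← hmean]
  push_cast
  congr 1
  refine intervalIntegral.integral_congr fun u hu => ?_
  rw [uIcc_of_le (by linarith)] at hu
  have hu0 : (u : ℂ) ≠ 0 := mod_cast ((sub_pos.2 hvk).trans_le hu.1).ne'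
  simp only [Complex.real_smul, Complex.cpow_add _ _ hu0, Complex.cpow_one, Complex.ofReal_div]
  ring

theorem integral_cpow_div_sqrt (s : ℂ) (hs : 0 < s.re) (k v : ℝ) (hk : 2 < k)
    (hv0 : 0 < v) (hv2 : v ≤ 2) :
    (2 / (π : ℂ)) *
        ∫ u in (k - v)..(k + v),
          (u : ℂ) ^ (s + 1) /
            (Real.sqrt (4 * k ^ 2 * v ^ 2 - (u ^ 2 - v ^ 2 - k ^ 2) ^ 2) : ℂ) =
      (k : ℂ) ^ s * F21 (-(s / 2)) (-(s / 2)) 1 (((v ^ 2 / k ^ 2 : ℝ)) : ℂ) :=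
  integral_cpow_div_sqrt_general s k v hv0 (hv2.trans_lt hk)
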